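/- (Convergence of value iteration with the DBS operator) Given a finite Markov decision process, let V* : S → ℝ satisfy T_m V* = V*, let (β_t)_{t≥1} be a sequence of positive reals with β_t → ∞, let V₀ : S → ℝ be arbitrary, and define V_t = T_{β_t}(T_{β_{t−1}}(… T_{β_1}(V₀)…)). Then ‖V_t − V*‖∞ → 0 as t → ∞; i.e., DBS value iteration converges to the optimal value function. -/

import Mathlib

/-!
The Bellman operator `Tm` is a `γ`-contraction in the sup norm, and the Boltzmann average differs
from the maximum by at most `|A| / β`, uniformly in the averaged vector
(`fmax_sub_boltz_le`). Hence the errors `e t = ‖V_t - V*‖` satisfy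
`e (t + 1) ≤ γ * e t + |A| / β (t + 1)`, a perturbed contraction whose perturbation tends to zero,
and such a sequence tends to zero (`tendsto_zero_of_le_mul_add`).
-/

noncomputable def boltz {ι : Type*} [Fintype ι] (β : ℝ) (x : ι → ℝ) : ℝ :=
  (∑ i, Real.exp (β * x i) * x i) / ∑ i, Real.exp (β * x i)

noncomputable def fmax {ι : Type*} [Fintype ι] [Nonempty ι] (x : ι → ℝ) : ℝ :=
  Finset.univ.sup' Finset.univ_nonempty x

noncomputable def fmin {ι : Type*} [Fintype ι] [Nonempty ι] (x : ι → ℝ) : ℝ :=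
  Finset.univ.inf' Finset.univ_nonempty x

noncomputable def Qval {S A : Type*} [Fintype S] (p : S → A → S → ℝ) (r : S → A → ℝ)
    (γ : ℝ) (V : S → ℝ) (s : S) (a : A) : ℝ :=
  r s a + γ * ∑ s', p s a s' * V s'

noncomputable def Tm {S A : Type*} [Fintype S] [Fintype A] [Nonempty A]
    (p : S → A → S → ℝ) (r : S → A → ℝ) (γ : ℝ) (V : S → ℝ) (s : S) : ℝ :=
  fmax (Qval p r γ V s)

noncomputable def Tb {S A : Type*} [Fintype S] [Fintype A]
    (p : S → A → S → ℝ) (r : S → A → ℝ) (γ : ℝ) (β : ℝ) (V : S → ℝ) (s : S) : ℝ :=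
  boltz β (Qval p r γ V s)

noncomputable def supNorm {S : Type*} [Fintype S] [Nonempty S] (V : S → ℝ) : ℝ :=
  fmax (fun s => |V s|)

open Filter

lemma le_fmax {ι : Type*} [Fintype ι] [Nonempty ι] (x : ι → ℝ) (i : ι) : x i ≤ fmax x :=
  Finset.le_sup' x (Finset.mem_univ i)

lemma fmax_le {ι : Type*} [Fintype ι] [Nonempty ι] {x : ι → ℝ} {c : ℝ} (h : ∀ i, x i ≤ c) :
    fmax x ≤ c :=
  Finset.sup'_le _ _ fun i _ => h i

lemma exists_eq_fmax {ι : Type*} [Fintype ι] [Nonempty ι] (x : ι → ℝ) : ∃ i, fmax x = x i := by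
  obtain ⟨i, -, hi⟩ := Finset.exists_mem_eq_sup' Finset.univ_nonempty x
  exact ⟨i, hi⟩

lemma sum_exp_pos {ι : Type*} [Fintype ι] [Nonempty ι] (b : ℝ) (x : ι → ℝ) :
    0 < ∑ i, Real.exp (b * x i) :=
  Finset.sum_pos (fun _ _ => Real.exp_pos _) Finset.univ_nonempty

lemma boltz_le_fmax {ι : Type*} [Fintype ι] [Nonempty ι] (b : ℝ) (x : ι → ℝ) :
    boltz b x ≤ fmax x := by
  unfold boltz
  rw [div_le_iff₀ (sum_exp_pos b x), Finset.mul_sum]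
  refine Finset.sum_le_sum fun i _ => ?_
  rw [mul_comm]
  exact mul_le_mul_of_nonneg_right (le_fmax x i) (Real.exp_pos _).le

/-- Each term contributes at most `exp (-b * d) * d ≤ 1 / b` to the gap, where `d` is the distance
of that entry from the maximum, once the common factor `exp (b * fmax x)` is bounded by the
partition function. -/
lemma fmax_sub_boltz_le {ι : Type*} [Fintype ι] [Nonempty ι] {b : ℝ} (hb : 0 < b) (x : ι → ℝ) :
    fmax x - boltz b x ≤ Fintype.card ι / b := by
  have hZ := sum_exp_pos b x
  obtain ⟨j, hj⟩ := exists_eq_fmax x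
  have hmax : Real.exp (b * fmax x) ≤ ∑ i, Real.exp (b * x i) := by
    rw [hj]
    exact Finset.single_le_sum (f := fun i => Real.exp (b * x i))
      (fun i _ => (Real.exp_pos _).le) (Finset.mem_univ j)
  have hterm : ∀ i, Real.exp (b * x i) * (fmax x - x i) ≤ Real.exp (b * fmax x) / b := by
    intro i
    rw [le_div_iff₀ hb]
    have h1 : b * (fmax x - x i) ≤ Real.exp (b * (fmax x - x i)) := by
      linarith [Real.add_one_le_exp (b * (fmax x - x i))]
    calc Real.exp (b * x i) * (fmax x - x i) * b
        = Real.exp (b * x i) * (b * (fmax x - x i)) := by ring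
      _ ≤ Real.exp (b * x i) * Real.exp (b * (fmax x - x i)) :=
          mul_le_mul_of_nonneg_left h1 (Real.exp_pos _).le
      _ = Real.exp (b * fmax x) := by rw [← Real.exp_add]; ring_nf
  have hgap : fmax x - boltz b x
      = (∑ i, Real.exp (b * x i) * (fmax x - x i)) / ∑ i, Real.exp (b * x i) := by
    unfold boltz
    simp only [mul_sub, Finset.sum_sub_distrib, ← Finset.sum_mul]
    field_simp
  rw [hgap, div_le_iff₀ hZ]
  calc ∑ i, Real.exp (b * x i) * (fmax x - x i)
      ≤ ∑ _i : ι, Real.exp (b * fmax x) / b := Finset.sum_le_sum fun i _ => hterm i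
    _ = Fintype.card ι / b * Real.exp (b * fmax x) := by
        simp only [Finset.sum_const, Finset.card_univ, nsmul_eq_mul]; ring
    _ ≤ Fintype.card ι / b * ∑ i, Real.exp (b * x i) :=
        mul_le_mul_of_nonneg_left hmax (by positivity)

lemma abs_fmax_sub_fmax_le {ι : Type*} [Fintype ι] [Nonempty ι] {x y : ι → ℝ} {c : ℝ}
    (h : ∀ i, |x i - y i| ≤ c) : |fmax x - fmax y| ≤ c := by
  have h1 : fmax x ≤ fmax y + c :=
    fmax_le fun i => by linarith [(abs_le.mp (h i)).2, le_fmax y i]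
  have h2 : fmax y ≤ fmax x + c :=
    fmax_le fun i => by linarith [(abs_le.mp (h i)).1, le_fmax x i]
  exact abs_le.mpr ⟨by linarith, by linarith⟩

lemma abs_Qval_sub_Qval_le {S A : Type*} [Fintype S] [Nonempty S]
    {p : S → A → S → ℝ} (hp0 : ∀ s a s', 0 ≤ p s a s') (hp1 : ∀ s a, ∑ s', p s a s' = 1)
    (r : S → A → ℝ) {γ : ℝ} (hγ0 : 0 ≤ γ) (V W : S → ℝ) (s : S) (a : A) :
    |Qval p r γ V s a - Qval p r γ W s a| ≤ γ * supNorm (fun s => V s - W s) := by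
  have h : Qval p r γ V s a - Qval p r γ W s a = γ * ∑ s', p s a s' * (V s' - W s') := by
    simp only [Qval, mul_sub, Finset.sum_sub_distrib]; ring
  rw [h, abs_mul, abs_of_nonneg hγ0]
  refine mul_le_mul_of_nonneg_left ?_ hγ0
  calc |∑ s', p s a s' * (V s' - W s')|
      ≤ ∑ s', |p s a s' * (V s' - W s')| := Finset.abs_sum_le_sum_abs _ _
    _ ≤ ∑ s', p s a s' * supNorm (fun s => V s - W s) := by
        refine Finset.sum_le_sum fun s' _ => ?_
        rw [abs_mul, abs_of_nonneg (hp0 s a s')]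
        exact mul_le_mul_of_nonneg_left (le_fmax (fun s => |V s - W s|) s') (hp0 s a s')
    _ = supNorm (fun s => V s - W s) := by rw [← Finset.sum_mul, hp1, one_mul]

lemma tendsto_zero_of_le_mul_add {e c : ℕ → ℝ} {γ : ℝ} (hγ0 : 0 ≤ γ) (hγ1 : γ < 1)
    (he : ∀ t, 0 ≤ e t) (hc : Tendsto c atTop (nhds 0))
    (hstep : ∀ t, e (t + 1) ≤ γ * e t + c t) : Tendsto e atTop (nhds 0) := by
  rw [Metric.tendsto_atTop]
  intro ε hε
  -- `ε / 2` is the fixed point of `x ↦ γ * x + (1 - γ) * (ε / 2)`.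
  have hδ : 0 < (1 - γ) * (ε / 2) := mul_pos (by linarith) (by linarith)
  obtain ⟨T, hT⟩ := eventually_atTop.mp (hc.eventually_lt_const hδ)
  have hk : ∀ k, e (T + k) ≤ γ ^ k * e T + ε / 2 := by
    intro k
    induction k with
    | zero => simp; linarith
    | succ k ih =>
      have h1 := hstep (T + k)
      have h2 := hT (T + k) (by omega)
      have h3 := mul_le_mul_of_nonneg_left ih hγ0
      rw [← add_assoc, pow_succ]
      linarith
  have hpow : Tendsto (fun k : ℕ => γ ^ k * e T) atTop (nhds 0) := by
    simpa using (tendsto_pow_atTop_nhds_zero_of_lt_one hγ0 hγ1).mul_const (e T)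
  obtain ⟨K, hK⟩ := eventually_atTop.mp (hpow.eventually_lt_const (half_pos hε))
  refine ⟨T + K, fun n hn => ?_⟩
  have h1 := hk (n - T)
  rw [show T + (n - T) = n by omega] at h1
  have h2 := hK (n - T) (by omega)
  rw [Real.dist_eq, sub_zero, abs_of_nonneg (he n)]
  linarith

theorem dbs_value_iteration_converges {S A : Type*} [Fintype S] [Fintype A] [Nonempty S] [Nonempty A]
    (p : S → A → S → ℝ) (hp0 : ∀ s a s', 0 ≤ p s a s') (hp1 : ∀ s a, ∑ s', p s a s' = 1)
    (r : S → A → ℝ) (γ : ℝ) (hγ0 : 0 ≤ γ) (hγ1 : γ < 1)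
    (Vstar : S → ℝ) (hVstar : Tm p r γ Vstar = Vstar)
    (β : ℕ → ℝ) (hβpos : ∀ t ≥ 1, 0 < β t) (hβtop : Tendsto β atTop atTop)
    (V₀ : S → ℝ) (Vseq : ℕ → S → ℝ)
    (hV0 : Vseq 0 = V₀)
    (hVsucc : ∀ t, Vseq (t + 1) = Tb p r γ (β (t + 1)) (Vseq t)) :
    Tendsto (fun t => supNorm (fun s => Vseq t s - Vstar s)) atTop (nhds 0) := by
  refine tendsto_zero_of_le_mul_add (c := fun t => (Fintype.card A : ℝ) / β (t + 1))
    hγ0 hγ1 (fun t => ?_) ?_ (fun t => ?_)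
  · obtain ⟨s⟩ := ‹Nonempty S›
    exact (abs_nonneg _).trans (le_fmax (fun s => |Vseq t s - Vstar s|) s)
  · exact (hβtop.comp (tendsto_add_atTop_nat 1)).const_div_atTop _
  · refine fmax_le fun s => ?_
    have h1 : Vseq (t + 1) s = boltz (β (t + 1)) (Qval p r γ (Vseq t) s) := by
      rw [hVsucc]; rfl
    have h2 : Vstar s = fmax (Qval p r γ Vstar s) := (congrFun hVstar s).symm
    have h3 := boltz_le_fmax (β (t + 1)) (Qval p r γ (Vseq t) s)
    have h4 := fmax_sub_boltz_le (hβpos (t + 1) (by omega)) (Qval p r γ (Vseq t) s)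
    have h5 := abs_le.mp (abs_fmax_sub_fmax_le
      (abs_Qval_sub_Qval_le hp0 hp1 r hγ0 (Vseq t) Vstar s))
    rw [abs_le]
    beta_reduce
    rw [h1, h2]
    have h6 : (0 : ℝ) ≤ Fintype.card A / β (t + 1) :=
      div_nonneg (Nat.cast_nonneg _) (hβpos (t + 1) (by omega)).le
    constructor <;> linarith [h5.1, h5.2]
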